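/- arXiv:1511.06636 — 2 statements merged into one kernel-verified Lean document; each statement's English description precedes it below -/
import Mathlib

section
/- Let f : ℝ × ℝ → ℝ be a smooth positive function, let g : ℝ³ → Matrix (Fin 3) (Fin 3) ℝ be smooth with each value symmetric and positive definite, and let Γ^γ_{αβ} denote the Christoffel symbols of g. Let c, k ∈ ℝ and let x : I → ℝ³ be a C² curve such that the curve t ↦ (c, x(t), k) satisfies the 5D Robertson–Walker geodesic system (3.14), and suppose there exists t₀ ∈ I with x'(t₀) ≠ 0. Then: (i) x satisfies the geodesic equations of g, i.e. (x^γ)'' + Σ_{α,β} Γ^γ_{αβ}(x) (x^α)'(x^β)' = 0 for γ ∈ {1,2,3}; and (ii) (c,k) is a critical point of f, i.e. (∂f/∂x⁰)(c,k) = 0 and (∂f/∂x⁴)(c,k) = 0. -/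
/-!
Along `t ↦ (c, x t, k)` the function `f` is constant, so the friction term of the spatial equations
drops out and they become the geodesic equations of `g`. The temporal and vertical equations reduce
to `f · ∂f · g(x', x') = 0` at `(c, k)`; at a time with `x' ≠ 0` both `f` and `g(x', x')` are
positive, which forces both partial derivatives of `f` to vanish.
-/

open scoped BigOperators

/-- The Christoffel symbols `Γ^γ_{αβ}` of a matrix-valued metric
`g : ℝ³ → Matrix (Fin 3) (Fin 3) ℝ`, using directional derivatives along the
coordinate directions. -/
noncomputable def christoffel (g : (Fin 3 → ℝ) → Matrix (Fin 3) (Fin 3) ℝ)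
    (y : Fin 3 → ℝ) (γ α β : Fin 3) : ℝ :=
  (1 / 2) * ∑ μ : Fin 3, (g y)⁻¹ γ μ *
    (fderiv ℝ (fun z => g z μ α) y (Pi.single β 1)
      + fderiv ℝ (fun z => g z μ β) y (Pi.single α 1)
      - fderiv ℝ (fun z => g z α β) y (Pi.single μ 1))

/-- The 5D Robertson–Walker geodesic system (3.14) for a curve
`t ↦ (x0 t, x t, x4 t)` on a set `I ⊆ ℝ`. -/
def RWGeodesic (f : ℝ × ℝ → ℝ)
    (g : (Fin 3 → ℝ) → Matrix (Fin 3) (Fin 3) ℝ) (I : Set ℝ)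
    (x0 : ℝ → ℝ) (x : ℝ → Fin 3 → ℝ) (x4 : ℝ → ℝ) : Prop :=
  (∀ t ∈ I, ∀ γ : Fin 3,
      deriv (deriv fun s => x s γ) t
        + (∑ α : Fin 3, ∑ β : Fin 3,
            christoffel g (x t) γ α β * deriv (fun s => x s α) t * deriv (fun s => x s β) t)
        + 2 * (f (x0 t, x4 t))⁻¹ * deriv (fun s => f (x0 s, x4 s)) t
            * deriv (fun s => x s γ) t = 0) ∧
  (∀ t ∈ I,
      deriv (deriv x0) t
        + f (x0 t, x4 t) * deriv (fun s => f (s, x4 t)) (x0 t)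
            * ∑ α : Fin 3, ∑ β : Fin 3,
                g (x t) α β * deriv (fun s => x s α) t * deriv (fun s => x s β) t = 0) ∧
  (∀ t ∈ I,
      deriv (deriv x4) t
        - f (x0 t, x4 t) * deriv (fun s => f (x0 t, s)) (x4 t)
            * ∑ α : Fin 3, ∑ β : Fin 3,
                g (x t) α β * deriv (fun s => x s α) t * deriv (fun s => x s β) t = 0)

/-- necessity direction of Theorem 4.4.  A nonconstant spatial
geodesic `t ↦ (c, x t, k)` forces `x` to solve the geodesic equations of `g`
and `(c,k)` to be a critical point of the warping function `f`. -/
theorem critical_point_of_spatial_geodesic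
    (f : ℝ × ℝ → ℝ) (hf : ContDiff ℝ (⊤ : ℕ∞) f) (hfpos : ∀ p, 0 < f p)
    (g : (Fin 3 → ℝ) → Matrix (Fin 3) (Fin 3) ℝ)
    (hg : ∀ α β : Fin 3, ContDiff ℝ (⊤ : ℕ∞) fun y => g y α β)
    (hgsym : ∀ y, (g y).IsSymm) (hgpd : ∀ y, (g y).PosDef)
    (c k : ℝ) (I : Set ℝ) (x : ℝ → Fin 3 → ℝ) (hx : ContDiff ℝ 2 x)
    (hgeo : RWGeodesic f g I (fun _ => c) x (fun _ => k))
    (hnc : ∃ t₀ ∈ I, ∃ γ : Fin 3, deriv (fun s => x s γ) t₀ ≠ 0) :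
    (∀ t ∈ I, ∀ γ : Fin 3,
        deriv (deriv fun s => x s γ) t
          + ∑ α : Fin 3, ∑ β : Fin 3,
              christoffel g (x t) γ α β * deriv (fun s => x s α) t
                * deriv (fun s => x s β) t = 0) ∧
      deriv (fun s => f (s, k)) c = 0 ∧ deriv (fun s => f (c, s)) k = 0 := by
  obtain ⟨h1, h2, h3⟩ := hgeo
  obtain ⟨t₀, ht₀, γ, hγ⟩ := hnc
  -- The squared `g`-speed at `t₀` is positive, by positive definiteness of `g`.
  have hpos : 0 < ∑ α : Fin 3, ∑ β : Fin 3,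
      g (x t₀) α β * deriv (fun s => x s α) t₀ * deriv (fun s => x s β) t₀ := by
    have hv : (fun α => deriv (fun s => x s α) t₀) ≠ 0 := fun h => hγ (congrFun h γ)
    have h := (hgpd (x t₀)).dotProduct_mulVec_pos hv
    refine h.trans_eq ?_
    simp only [dotProduct, Matrix.mulVec, Finset.mul_sum, Pi.star_apply, star_trivial]
    refine Finset.sum_congr rfl fun α _ => Finset.sum_congr rfl fun β _ => ?_
    ring
  have hfne := (hfpos (c, k)).ne'
  refine ⟨fun t ht γ => ?_, ?_, ?_⟩
  · -- `f` is constant along the curve, so the friction term vanishes.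
    simpa using h1 t ht γ
  · have h := h2 t₀ ht₀
    simp only [deriv_const', zero_add, mul_eq_zero, hfne, hpos.ne', false_or, or_false] at h
    exact h
  · have h := h3 t₀ ht₀
    simp only [deriv_const', zero_sub, neg_eq_zero, mul_eq_zero, hfne, hpos.ne', false_or,
      or_false] at h
    exact h
end

section
/- Let f : ℝ × ℝ → ℝ be a smooth positive function and let g : ℝ³ → Matrix (Fin 3) (Fin 3) ℝ be smooth with each value symmetric and positive definite, with Christoffel symbols Γ^γ_{αβ}. If there exists an interval I, constants c, k ∈ ℝ, and a C² curve x : I → ℝ³ with x'(t₀) ≠ 0 for some t₀ ∈ I such that t ↦ (c, x(t), k) satisfies the 5D Robertson–Walker geodesic system (3.14) (i.e. a nonconstant spatial geodesic exists), then f has a critical point: there exists (c,k) ∈ ℝ² with (∂f/∂x⁰)(c,k) = 0 and (∂f/∂x⁴)(c,k) = 0. Conversely, if (c,k) ∈ ℝ² is a critical point of f, then for every p, v ∈ ℝ³ with v ≠ 0 there exist an open interval I containing 0 and a C² curve x : I → ℝ³ with x(0) = p, x'(0) = v, and x'(t) ≠ 0 for all t ∈ I, such that t ↦ (c, x(t),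 k) satisfies (3.14); hence nonconstant spatial geodesics exist if and only if the warping function f has at least one critical point. -/
/-!
Along a curve with constant temporal and vertical components `c`, `k`, the temporal and vertical
equations reduce to `f * ∂f * g(x', x') = 0`. Since `f > 0` and `g` is positive definite, a single
nonzero velocity forces both partial derivatives of `f` to vanish at `(c, k)`. Conversely, at a
critical point these two equations hold for every curve, and the remaining one is the geodesic
equation of `g`, because `f` is constant along the curve. The Christoffel symbols are `C¹`
(`contDiff_christoffel`), so the Picard–Lindelöf theorem yields a local geodesic with prescribed
initial data (`exists_second_order_solution`). As the curve has to be `C²` on all of `ℝ`, the local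
geodesic is cut off by a bump function away from a small interval around `0`
(`exists_contDiff_extension`).
-/

open scoped BigOperators

lemma metric_sum_pos {M : Matrix (Fin 3) (Fin 3) ℝ} (hM : M.PosDef) {w : Fin 3 → ℝ}
    (hw : w ≠ 0) : 0 < ∑ α : Fin 3, ∑ β : Fin 3, M α β * w α * w β := by
  have h := hM.dotProduct_mulVec_pos hw
  simp only [dotProduct, Matrix.mulVec, star_trivial, Finset.mul_sum] at h
  refine h.trans_eq (Finset.sum_congr rfl fun α _ => Finset.sum_congr rfl fun β _ => ?_)
  ring

lemma contDiff_christoffel {g : (Fin 3 → ℝ) → Matrix (Fin 3) (Fin 3) ℝ}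
    (hg : ∀ α β : Fin 3, ContDiff ℝ (⊤ : ℕ∞) fun y => g y α β)
    (hgpd : ∀ y, (g y).PosDef) (γ α β : Fin 3) :
    ContDiff ℝ 1 fun y => christoffel g y γ α β := by
  have hg1 : ∀ α β : Fin 3, ContDiff ℝ 1 fun y => g y α β := fun α β =>
    (hg α β).of_le (by exact_mod_cast le_top)
  have hdet : ContDiff ℝ 1 fun y => (g y).det := by
    simp only [Matrix.det_fin_three]
    fun_prop
  have hdet0 : ∀ y, (g y).det ≠ 0 := fun y => (hgpd y).det_pos.ne'
  have hadj : ∀ i j : Fin 3, ContDiff ℝ 1 fun y => (g y).adjugate i j := by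
    intro i j
    simp only [Matrix.adjugate_fin_three]
    fin_cases i <;> fin_cases j <;> simp <;> fun_prop
  have hinv : ∀ i j : Fin 3, ContDiff ℝ 1 fun y => (g y)⁻¹ i j := by
    intro i j
    simp only [Matrix.inv_def, Ring.inverse_eq_inv', Matrix.smul_apply, smul_eq_mul]
    exact (hdet.inv hdet0).mul (hadj i j)
  have hder : ∀ (i j : Fin 3) (u : Fin 3 → ℝ),
      ContDiff ℝ 1 fun y => fderiv ℝ (fun z => g z i j) y u := by
    intro i j u
    have h : ContDiff ℝ 1 (fderiv ℝ fun z => g z i j) :=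
      (hg i j).fderiv_right (WithTop.coe_le_coe.2 le_top)
    exact h.clm_apply contDiff_const
  unfold christoffel
  exact contDiff_const.mul <| ContDiff.sum fun μ _ =>
    (hinv γ μ).mul (((hder μ α _).add (hder μ β _)).sub (hder α β _))

/-- A curve that is `C²` on an open interval around `0` agrees with a globally `C²` curve on a
smaller interval: it is multiplied by a smooth bump function. -/
lemma exists_contDiff_extension {E : Type*} [NormedAddCommGroup E] [NormedSpace ℝ E]
    {x : ℝ → E} {ε : ℝ} (hε : 0 < ε) (hx : ContDiffOn ℝ 2 x (Set.Ioo (-ε) ε)) :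
    ∃ X : ℝ → E, ContDiff ℝ 2 X ∧
      ∀ t ∈ Set.Ioo (-(ε / 3)) (ε / 3), X =ᶠ[nhds t] x := by
  let χ : ContDiffBump (0 : ℝ) := ⟨ε / 3, ε / 2, by positivity, by linarith⟩
  refine ⟨fun t => χ t • x t, ?_, fun t ht => ?_⟩
  · rw [contDiff_iff_contDiffAt]
    intro t
    by_cases ht : t ∈ Set.Ioo (-ε) ε
    · exact χ.contDiffAt.smul (hx.contDiffAt (isOpen_Ioo.mem_nhds ht))
    · have hts : t ∉ tsupport χ := by
        rw [χ.tsupport_eq, Metric.mem_closedBall, Real.dist_eq, sub_zero, abs_le]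
        rintro ⟨h1, h2⟩
        have hr : χ.rOut = ε / 2 := rfl
        exact ht ⟨by linarith, by linarith⟩
      have h0 : (fun t => χ t • x t) =ᶠ[nhds t] fun _ => 0 := by
        filter_upwards [notMem_tsupport_iff_eventuallyEq.1 hts] with s hs
        simp [hs]
      exact contDiffAt_const.congr_of_eventuallyEq h0
  · have hb : t ∈ Metric.ball (0 : ℝ) χ.rIn := by
      rw [Metric.mem_ball, Real.dist_eq, sub_zero]
      exact abs_lt.2 ht
    filter_upwards [χ.eventuallyEq_one_of_mem_ball hb] with s hs
    simp [hs]

/-- Local solvability of a second-order autonomous equation `x'' = F (x, x')`, with nonzero initial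
velocity, by a globally `C²` curve. The first-order system `(x, w)' = (w, F (x, w))` has a `C¹`
right-hand side, so the Picard–Lindelöf theorem applies. -/
lemma exists_second_order_solution {E : Type*} [NormedAddCommGroup E] [NormedSpace ℝ E]
    [CompleteSpace E] {F : E × E → E} (hF : ContDiff ℝ 1 F) (p v : E) (hv : v ≠ 0) :
    ∃ (ε : ℝ) (X : ℝ → E), 0 < ε ∧ ContDiff ℝ 2 X ∧ X 0 = p ∧ deriv X 0 = v ∧
      ∀ t ∈ Set.Ioo (-ε) ε, deriv X t ≠ 0 ∧ HasDerivAt (deriv X) (F (X t, deriv X t)) t := by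
  have hV : ContDiff ℝ 1 fun z : E × E => (z.2, F z) := contDiff_snd.prodMk hF
  obtain ⟨a, ha0, ε, hε, ha⟩ :=
    hV.contDiffAt.exists_forall_mem_closedBall_exists_eq_forall_mem_Ioo_hasDerivAt₀
      (x₀ := (p, v)) 0
  simp only [zero_sub, zero_add] at ha
  have hx : ∀ t ∈ Set.Ioo (-ε) ε, HasDerivAt (fun s => (a s).1) (a t).2 t := fun t ht =>
    (hasFDerivAt_fst.comp_hasDerivAt t (ha t ht) :)
  have hw : ∀ t ∈ Set.Ioo (-ε) ε, HasDerivAt (fun s => (a s).2) (F (a t)) t := fun t ht =>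
    (hasFDerivAt_snd.comp_hasDerivAt t (ha t ht) :)
  have hac : ContinuousOn a (Set.Ioo (-ε) ε) := fun t ht =>
    (ha t ht).continuousAt.continuousWithinAt
  have hw1 : ContDiffOn ℝ 1 (fun s => (a s).2) (Set.Ioo (-ε) ε) := by
    rw [show (1 : WithTop ℕ∞) = 0 + 1 from (zero_add 1).symm,
      contDiffOn_succ_iff_deriv_of_isOpen isOpen_Ioo]
    refine ⟨fun t ht => (hw t ht).differentiableAt.differentiableWithinAt, by simp, ?_⟩
    rw [contDiffOn_zero]
    exact (hF.continuous.comp_continuousOn hac).congr fun t ht => (hw t ht).deriv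
  have hx2 : ContDiffOn ℝ 2 (fun s => (a s).1) (Set.Ioo (-ε) ε) := by
    rw [show (2 : WithTop ℕ∞) = 1 + 1 from one_add_one_eq_two.symm,
      contDiffOn_succ_iff_deriv_of_isOpen isOpen_Ioo]
    refine ⟨fun t ht => (hx t ht).differentiableAt.differentiableWithinAt, by simp, ?_⟩
    exact hw1.congr fun t ht => (hx t ht).deriv
  obtain ⟨X, hX, hXx⟩ := exists_contDiff_extension hε hx2
  have hsub : Set.Ioo (-(ε / 3)) (ε / 3) ⊆ Set.Ioo (-ε) ε :=
    Set.Ioo_subset_Ioo (by linarith) (by linarith)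
  have hXd : ∀ t ∈ Set.Ioo (-(ε / 3)) (ε / 3), deriv X t = (a t).2 := fun t ht => by
    rw [(hXx t ht).deriv_eq, (hx t (hsub ht)).deriv]
  have h0 : (0 : ℝ) ∈ Set.Ioo (-(ε / 3)) (ε / 3) := ⟨by linarith, by linarith⟩
  have hX0 : X 0 = p := by rw [(hXx 0 h0).eq_of_nhds, ha0]
  have hX1 : deriv X 0 = v := by rw [hXd 0 h0, ha0]
  have hcont : Continuous (deriv X) := hX.continuous_deriv (by norm_num)
  have hne : ∀ᶠ t in nhds (0 : ℝ), deriv X t ≠ 0 :=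
    hcont.continuousAt.eventually_ne (by rwa [hX1])
  obtain ⟨δ, hδ, hball⟩ := Metric.eventually_nhds_iff_ball.1 hne
  refine ⟨min δ (ε / 3), X, lt_min hδ (by linarith), hX, hX0, hX1, fun t ht => ?_⟩
  have ht3 : t ∈ Set.Ioo (-(ε / 3)) (ε / 3) :=
    Set.Ioo_subset_Ioo (neg_le_neg (min_le_right _ _)) (min_le_right _ _) ht
  refine ⟨hball t ?_, ?_⟩
  · rw [Metric.mem_ball, Real.dist_eq, sub_zero]
    exact (abs_lt.2 ht).trans_le (min_le_left _ _)
  · have hd : deriv X =ᶠ[nhds t] fun s => (a s).2 := by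
      filter_upwards [isOpen_Ioo.mem_nhds ht3] with s hs using hXd s hs
    rw [hXd t ht3, (hXx t ht3).eq_of_nhds]
    exact (hw t (hsub ht3)).congr_of_eventuallyEq hd

/-- existence remark after Theorem 4.4.  Nonconstant spatial
geodesics of the 5D Robertson–Walker universe exist iff the warping function
`f` has at least one critical point. -/
theorem spatial_geodesics_exist_iff_critical_point
    (f : ℝ × ℝ → ℝ) (hf : ContDiff ℝ (⊤ : ℕ∞) f) (hfpos : ∀ p, 0 < f p)
    (g : (Fin 3 → ℝ) → Matrix (Fin 3) (Fin 3) ℝ)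
    (hg : ∀ α β : Fin 3, ContDiff ℝ (⊤ : ℕ∞) fun y => g y α β)
    (hgsym : ∀ y, (g y).IsSymm) (hgpd : ∀ y, (g y).PosDef) :
    ((∃ (I : Set ℝ) (c k : ℝ) (x : ℝ → Fin 3 → ℝ),
        ContDiff ℝ 2 x ∧
        (∃ t₀ ∈ I, ∃ γ : Fin 3, deriv (fun s => x s γ) t₀ ≠ 0) ∧
        RWGeodesic f g I (fun _ => c) x (fun _ => k)) →
      ∃ q : ℝ × ℝ,
        deriv (fun s => f (s, q.2)) q.1 = 0 ∧ deriv (fun s => f (q.1, s)) q.2 = 0) ∧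
    (∀ c k : ℝ,
      deriv (fun s => f (s, k)) c = 0 → deriv (fun s => f (c, s)) k = 0 →
      ∀ p v : Fin 3 → ℝ, v ≠ 0 →
        ∃ (ε : ℝ) (x : ℝ → Fin 3 → ℝ),
          0 < ε ∧ ContDiff ℝ 2 x ∧ x 0 = p ∧ deriv x 0 = v ∧
          (∀ t ∈ Set.Ioo (-ε) ε, deriv x t ≠ 0) ∧
          RWGeodesic f g (Set.Ioo (-ε) ε) (fun _ => c) x (fun _ => k)) := by
  constructor
  · rintro ⟨I, c, k, x, hx, ⟨t, ht, γ, hγ⟩, -, h0, h4⟩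
    have hpos : 0 < ∑ α : Fin 3, ∑ β : Fin 3,
        g (x t) α β * deriv (fun s => x s α) t * deriv (fun s => x s β) t :=
      metric_sum_pos (hgpd (x t)) (w := fun α => deriv (fun s => x s α) t)
        fun h => hγ (congrFun h γ)
    have hf0 := (hfpos (c, k)).ne'
    refine ⟨(c, k), ?_, ?_⟩
    · simpa [hf0, hpos.ne'] using h0 t ht
    · simpa [hf0, hpos.ne'] using h4 t ht
  · intro c k hc hk p v hv
    -- the geodesic equation of `g`, solved for the acceleration
    let F : (Fin 3 → ℝ) × (Fin 3 → ℝ) → Fin 3 → ℝ := fun z γ =>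
      -∑ α : Fin 3, ∑ β : Fin 3, christoffel g z.1 γ α β * z.2 α * z.2 β
    have hF : ContDiff ℝ 1 F := by
      rw [contDiff_pi]
      intro γ
      have hΓ : ∀ α β : Fin 3, ContDiff ℝ 1
          fun z : (Fin 3 → ℝ) × (Fin 3 → ℝ) => christoffel g z.1 γ α β := fun α β =>
        (contDiff_christoffel hg hgpd γ α β).comp contDiff_fst
      have hz : ∀ α : Fin 3, ContDiff ℝ 1
          fun z : (Fin 3 → ℝ) × (Fin 3 → ℝ) => z.2 α := fun α => by fun_prop
      exact (ContDiff.sum fun α _ => ContDiff.sum fun β _ =>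
        ((hΓ α β).mul (hz α)).mul (hz β)).neg
    obtain ⟨ε, x, hε, hx, hx0, hx1, hsol⟩ := exists_second_order_solution hF p v hv
    have hcoord : ∀ γ : Fin 3, (deriv fun s => x s γ) = fun t => deriv x t γ := fun γ =>
      funext fun t => (hasDerivAt_pi.1 (hx.differentiable (by norm_num) t).hasDerivAt γ).deriv
    refine ⟨ε, x, hε, hx, hx0, hx1, fun t ht => (hsol t ht).1, ?_, ?_, ?_⟩
    · intro t ht γ
      have hγ := (hasDerivAt_pi.1 (hsol t ht).2 γ).deriv
      simp only [hcoord, deriv_const, mul_zero, zero_mul, add_zero, hγ]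
      exact neg_add_cancel _
    · intro t _
      simp [hc]
    · intro t _
      simp [hk]
end
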